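/- arXiv:0808.0695 — 2 statements merged into one kernel-verified Lean document; each statement's English description precedes it below -/
import Mathlib

section
/- Let C1 and C2 be cubic curves in the projective plane over a field k whose intersection consists of 9 distinct k-rational points p1,...,p9 (the intersection being transverse). Then no three of p1,...,p9 lie on a line if and only if every nonzero cubic in the pencil spanned by C1 and C2 is irreducible. -/
open MvPolynomial

/-- Two nonzero vectors represent the same point of projective space. -/
def ProjEq {k : Type*} [Field k] {n : ℕ} (p q : Fin n → k) : Prop :=
  ∃ c : k, c ≠ 0 ∧ q = c • p

/-!
A reducible cubic `G` of the pencil contains a line. If `H` is a second generator of the pencil,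
transversality of `G` and `H` at the base points makes `H` meet that line transversally, hence in
three distinct points over the algebraic closure. These are common zeros of `G` and `H`, so three
of the base points are collinear.

Conversely, let three base points lie on a line. Every cubic of the pencil restricts to the line as
a binary cubic vanishing at these points, and such binary cubics form a one-dimensional space, so
some member of the pencil restricts to `0` and contains the line.
-/

namespace CubicPencil

section LinearFactors

variable {R σ : Type*} [CommRing R]

lemma homogeneousComponent_add_mul {f g : MvPolynomial σ R} {m n : ℕ}
    (hf : f.totalDegree ≤ m) (hg : g.totalDegree ≤ n) :
    homogeneousComponent (m + n) (f * g) =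
      homogeneousComponent m f * homogeneousComponent n g := by
  classical
  ext d
  rw [coeff_homogeneousComponent]
  split_ifs with hd
  · rw [coeff_mul, coeff_mul]
    refine Finset.sum_congr rfl fun ⟨a, b⟩ hab => ?_
    have hdeg : a.degree + b.degree = m + n := by
      rw [← hd, ← Finset.HasAntidiagonal.mem_antidiagonal.mp hab, map_add]
    simp only [coeff_homogeneousComponent]
    rcases lt_trichotomy a.degree m with ha | ha | ha
    · have hb : coeff b g = 0 := coeff_eq_zero_of_totalDegree_lt
        (show g.totalDegree < b.degree by omega)
      simp [hb]
    · have hb : b.degree = n := by omega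
      simp [ha, hb]
    · have hb : coeff a f = 0 := coeff_eq_zero_of_totalDegree_lt
        (show f.totalDegree < a.degree by omega)
      simp [hb]
  · exact (((homogeneousComponent_isHomogeneous m f).mul
      (homogeneousComponent_isHomogeneous n g)).coeff_eq_zero hd).symm

lemma isUnit_of_totalDegree_eq_zero {k : Type*} [Field k] {f : MvPolynomial σ k} (hf : f ≠ 0)
    (hdeg : f.totalDegree = 0) : IsUnit f := by
  rw [totalDegree_eq_zero_iff_eq_C] at hdeg
  rw [hdeg] at hf ⊢
  exact (isUnit_iff_ne_zero.mpr fun h => hf (by rw [h, C_0])).map C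

variable [Fintype σ]

/-- The linear form `l ⬝ᵥ X` with coefficient vector `l`. -/
noncomputable def linearForm (l : σ → R) : MvPolynomial σ R :=
  ∑ i, C (l i) * X i

lemma eval_linearForm (l x : σ → R) : eval x (linearForm l) = l ⬝ᵥ x := by
  simp [linearForm, dotProduct]

lemma isHomogeneous_linearForm (l : σ → R) : (linearForm l).IsHomogeneous 1 :=
  IsHomogeneous.sum _ _ _ fun _ _ => isHomogeneous_C_mul_X _ _

lemma exists_eq_linearForm {L : MvPolynomial σ R} (hL : L.IsHomogeneous 1) :
    ∃ l, L = linearForm l := by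
  have hL' : L ∈ homogeneousSubmodule σ R 1 := hL
  rw [homogeneousSubmodule_one_eq_span_X, Submodule.mem_span_range_iff_exists_fun] at hL'
  obtain ⟨l, rfl⟩ := hL'
  exact ⟨l, by simp only [linearForm, smul_eq_C_mul]⟩

lemma map_linearForm {S : Type*} [CommRing S] (φ : R →+* S) (l : σ → R) :
    map φ (linearForm l) = linearForm (φ ∘ l) := by
  simp [linearForm]

lemma pderiv_linearForm (l : σ → R) (i : σ) : pderiv i (linearForm l) = C (l i) := by
  classical
  simp [linearForm, pderiv_X, Pi.single_apply]

lemma not_irreducible_of_linearForm_dvd [IsDomain R] {G : MvPolynomial σ R} {n : ℕ}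
    (hG : G.IsHomogeneous n) (hn : 1 < n) {l : σ → R} (hl : linearForm l ∣ G) :
    ¬ Irreducible G := by
  intro hirr
  obtain ⟨Q, rfl⟩ := hl
  rcases hirr.isUnit_or_isUnit rfl with hunit | hunit
  · have h0 := hunit.map (eval (0 : σ → R))
    rw [eval_linearForm, dotProduct_zero] at h0
    exact not_isUnit_zero h0
  · have hQ : Q.IsHomogeneous 0 :=
      isHomogeneous_of_totalDegree_zero _ (isUnit_iff_totalDegree_of_isReduced.mp hunit).2
    exact hn.ne (((isHomogeneous_linearForm l).mul hQ).inj_right hG hirr.ne_zero)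

lemma exists_linearForm_dvd_of_not_irreducible {k : Type*} [Field k] {G : MvPolynomial σ k}
    {n : ℕ} (hG : G.IsHomogeneous n) (hG0 : G ≠ 0) (hn0 : n ≠ 0) (hn : n ≤ 3)
    (hirr : ¬ Irreducible G) : ∃ l, linearForm l ∣ G := by
  have hdeg : G.totalDegree = n := hG.totalDegree hG0
  have hunit : ¬ IsUnit G := fun h =>
    hn0 (hdeg.symm.trans (isUnit_iff_totalDegree_of_isReduced.mp h).2)
  obtain ⟨f, g, rfl, hf, hg⟩ : ∃ f g, G = f * g ∧ ¬ IsUnit f ∧ ¬ IsUnit g := by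
    simpa [irreducible_iff, hunit] using hirr
  have hf0 := left_ne_zero_of_mul hG0
  have hg0 := right_ne_zero_of_mul hG0
  rw [totalDegree_mul_of_isDomain hf0 hg0] at hdeg
  have hf1 := mt (isUnit_of_totalDegree_eq_zero hf0) hf
  have hg1 := mt (isUnit_of_totalDegree_eq_zero hg0) hg
  -- A product which is homogeneous is the product of the leading forms of its factors.
  have hfg : f * g =
      homogeneousComponent f.totalDegree f * homogeneousComponent g.totalDegree g := by
    rw [← homogeneousComponent_add_mul le_rfl le_rfl, hdeg, homogeneousComponent_eq_self hG]
  have hlead (h : MvPolynomial σ k) (h1 : h.totalDegree = 1) :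
      ∃ l, homogeneousComponent h.totalDegree h = linearForm l :=
    exists_eq_linearForm (h1 ▸ homogeneousComponent_isHomogeneous h.totalDegree h)
  obtain hf' | hg' : f.totalDegree = 1 ∨ g.totalDegree = 1 := by omega
  · obtain ⟨l, hl⟩ := hlead f hf'
    exact ⟨l, by rw [hfg, hl]; exact dvd_mul_right _ _⟩
  · obtain ⟨l, hl⟩ := hlead g hg'
    exact ⟨l, by rw [hfg, hl]; exact dvd_mul_left _ _⟩

lemma linearForm_dvd_of_forall_eval_eq_zero {k K : Type*} [Field k] [Field K] [Infinite K]
    (φ : k →+* K) {G : MvPolynomial σ k} {l : σ → k} (hl : l ≠ 0)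
    (hG : ∀ x : σ → K, (φ ∘ l) ⬝ᵥ x = 0 → eval x (map φ G) = 0) : linearForm l ∣ G := by
  classical
  obtain ⟨j, hj⟩ := Function.ne_iff.mp hl
  -- `ψ` is the substitution given by the projection onto the hyperplane `l ⬝ᵥ x = 0` along the
  -- `j`-th axis. It is the identity modulo `linearForm l`, and it kills `G`.
  let w : σ → k := Pi.single j (l j)⁻¹
  let ψ : MvPolynomial σ k →ₐ[k] MvPolynomial σ k := aeval fun i => X i - C (w i) * linearForm l
  have hlw : l ⬝ᵥ w = 1 := by simpa [w] using mul_inv_cancel₀ hj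
  have hψ : ψ G = 0 := by
    refine map_injective φ φ.injective (MvPolynomial.funext fun x => ?_)
    let y : σ → K := x - ((φ ∘ l) ⬝ᵥ x) • (φ ∘ w)
    have hy : (φ ∘ l) ⬝ᵥ y = 0 := by
      rw [dotProduct_sub, dotProduct_smul, ← RingHom.map_dotProduct, hlw, map_one, smul_eq_mul,
        mul_one, sub_self]
    have hcomp : ((eval x).comp (map φ)).comp ψ.toRingHom = (eval y).comp (map φ) := by
      ext i
      · simp
      · simp [ψ, y, map_linearForm, eval_linearForm, mul_comm]
    rw [map_zero, map_zero, ← hG y hy]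
    exact congrArg (· G) hcomp
  have hmod : (Ideal.Quotient.mkₐ k (Ideal.span {linearForm l})).comp ψ =
      Ideal.Quotient.mkₐ k (Ideal.span {linearForm l}) := by
    ext i
    simp [ψ]
  have hG0 := congrArg (· G) hmod
  simp only [AlgHom.comp_apply, hψ, map_zero] at hG0
  exact Ideal.mem_span_singleton.mp (Ideal.Quotient.eq_zero_iff_mem.mp hG0.symm)

end LinearFactors

section Gradient

/-- The vector of partial derivatives of `F` at `x`. -/
noncomputable def gradient {R σ : Type*} [CommSemiring R] (F : MvPolynomial σ R) (x : σ → R) :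
    σ → R :=
  fun i => eval x (pderiv i F)

variable {R S σ : Type*} [CommRing R] [CommRing S]

lemma eval_smul_of_isHomogeneous {F : MvPolynomial σ R} {n : ℕ} (hF : F.IsHomogeneous n) (c : R)
    (x : σ → R) : eval (c • x) F = c ^ n * eval x F := by
  rw [eval_eq, eval_eq, Finset.mul_sum]
  refine Finset.sum_congr rfl fun d hd => ?_
  simp only [Pi.smul_apply, smul_eq_mul, mul_pow, Finset.prod_mul_distrib,
    Finset.prod_pow_eq_pow_sum, ← hF.degree_eq_sum_deg_support hd]
  ring

lemma gradient_smul {F : MvPolynomial σ R} {n : ℕ} (hF : F.IsHomogeneous n) (c : R) (x : σ → R) :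
    gradient F (c • x) = c ^ (n - 1) • gradient F x :=
  funext fun _ => eval_smul_of_isHomogeneous hF.pderiv c x

lemma gradient_map (φ : R →+* S) (F : MvPolynomial σ R) (x : σ → R) :
    gradient (map φ F) (φ ∘ x) = φ ∘ gradient F x := by
  funext i
  rw [gradient, pderiv_map, eval_map, ← eval₂_comp]
  rfl

lemma gradient_add (F G : MvPolynomial σ R) (x : σ → R) :
    gradient (F + G) x = gradient F x + gradient G x := by
  ext i; simp [gradient]

lemma gradient_smul_left (c : R) (F : MvPolynomial σ R) (x : σ → R) :
    gradient (c • F) x = c • gradient F x := by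
  ext i; simp [gradient]

lemma gradient_dotProduct_self [Fintype σ] {F : MvPolynomial σ R} {n : ℕ}
    (hF : F.IsHomogeneous n) (x : σ → R) : gradient F x ⬝ᵥ x = n * eval x F := by
  simpa [gradient, dotProduct, mul_comm] using congrArg (eval x) hF.sum_X_mul_pderiv

/-- The hypersurfaces `F = 0` and `G = 0` have distinct tangent spaces at `x`: some `2 × 2` minor
of their Jacobian matrix does not vanish. -/
def TransverseAt (F G : MvPolynomial σ R) (x : σ → R) : Prop :=
  ∃ i j, gradient F x i * gradient G x j ≠ gradient F x j * gradient G x i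

namespace TransverseAt

variable {F G : MvPolynomial σ R} {x : σ → R}

lemma ne_zero_left (h : TransverseAt F G x) : F ≠ 0 := by
  rintro rfl
  obtain ⟨i, j, hij⟩ := h
  simp [gradient] at hij

lemma linearCombination [IsDomain R] (h : TransverseAt F G x) {a b c d : R}
    (hdet : a * d - b * c ≠ 0) : TransverseAt (a • F + b • G) (c • F + d • G) x := by
  obtain ⟨i, j, hij⟩ := h
  refine ⟨i, j, sub_ne_zero.mp ?_⟩
  convert mul_ne_zero hdet (sub_ne_zero.mpr hij) using 1
  simp only [gradient_add, gradient_smul_left, Pi.add_apply, Pi.smul_apply, smul_eq_mul]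
  ring

lemma map (h : TransverseAt F G x) {φ : R →+* S} (hφ : Function.Injective φ) :
    TransverseAt (map φ F) (map φ G) (φ ∘ x) := by
  obtain ⟨i, j, hij⟩ := h
  refine ⟨i, j, ?_⟩
  simpa only [gradient_map, Function.comp_apply, ← map_mul] using hφ.ne hij

lemma smul [IsDomain R] {m n : ℕ} (h : TransverseAt F G x) (hF : F.IsHomogeneous m)
    (hG : G.IsHomogeneous n) {c : R} (hc : c ≠ 0) : TransverseAt F G (c • x) := by
  obtain ⟨i, j, hij⟩ := h
  refine ⟨i, j, sub_ne_zero.mp ?_⟩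
  convert mul_ne_zero (mul_ne_zero (pow_ne_zero (m - 1) hc) (pow_ne_zero (n - 1) hc))
    (sub_ne_zero.mpr hij) using 1
  simp only [gradient_smul hF, gradient_smul hG, Pi.smul_apply, smul_eq_mul]
  ring

/-- If `F` contains the hyperplane `l ⬝ᵥ x = 0`, a minor of the Jacobian matrix of `F` and `G` at
one of its points is, up to a factor, the derivative of `G` along a vector of the hyperplane. -/
lemma exists_gradient_dotProduct_ne_zero [Fintype σ] {l : σ → R}
    (h : TransverseAt F G x) (hF : linearForm l ∣ F) (hx : l ⬝ᵥ x = 0) :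
    ∃ y, l ⬝ᵥ y = 0 ∧ gradient G x ⬝ᵥ y ≠ 0 := by
  classical
  obtain ⟨Q, rfl⟩ := hF
  obtain ⟨i, j, hij⟩ := h
  have hgrad (a : σ) : gradient (linearForm l * Q) x a = eval x Q * l a := by
    simp [gradient, pderiv_linearForm, eval_linearForm, hx, mul_comm]
  refine ⟨Pi.single j (l i) - Pi.single i (l j), ?_, fun h0 => hij ?_⟩
  · simp [dotProduct_sub, mul_comm]
  · rw [dotProduct_sub, dotProduct_single, dotProduct_single] at h0
    rw [hgrad, hgrad]
    linear_combination eval x Q * h0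

end TransverseAt

end Gradient

section LineRestriction

/-- The restriction of `F` to the line through `u` and `v`, parametrized affinely as
`t ↦ u + t • v`; the point `v` of the projective line corresponds to `t = ∞`. -/
noncomputable def lineRestriction {R σ : Type*} [CommSemiring R] (u v : σ → R) :
    MvPolynomial σ R →ₐ[R] Polynomial R :=
  aeval fun i => Polynomial.C (u i) + Polynomial.C (v i) * Polynomial.X

variable {R S σ : Type*} [CommRing R] [CommRing S]

lemma eval_lineRestriction (u v : σ → R) (F : MvPolynomial σ R) (t : R) :
    (lineRestriction u v F).eval t = eval (u + t • v) F := by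
  have h : (Polynomial.aeval t).comp (lineRestriction u v) = aeval (u + t • v) := by
    ext i
    simp [lineRestriction, mul_comm t]
  simpa [aeval_eq_eval] using DFunLike.congr_fun h F

lemma map_lineRestriction (φ : R →+* S) (u v : σ → R) (F : MvPolynomial σ R) :
    (lineRestriction u v F).map φ = lineRestriction (φ ∘ u) (φ ∘ v) (map φ F) := by
  induction F using MvPolynomial.induction_on with
  | C a => simp [lineRestriction]
  | add f g hf hg => simp only [map_add, Polynomial.map_add, hf, hg]
  | mul_X f i hf =>
    simp only [map_mul, Polynomial.map_mul, hf]
    simp [lineRestriction]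

lemma derivative_lineRestriction [Fintype σ] (u v : σ → R) (F : MvPolynomial σ R) :
    (lineRestriction u v F).derivative =
      ∑ i, Polynomial.C (v i) * lineRestriction u v (pderiv i F) := by
  classical
  induction F using MvPolynomial.induction_on with
  | C a => simp [lineRestriction]
  | add f g hf hg => simp only [map_add, hf, hg, mul_add, Finset.sum_add_distrib]
  | mul_X f i hf =>
    have hX : (lineRestriction u v (X i)).derivative = Polynomial.C (v i) := by
      simp [lineRestriction]
    have hsum : ∑ j, Polynomial.C (v j) * lineRestriction u v (f * pderiv j (X i)) =
        lineRestriction u v f * Polynomial.C (v i) := by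
      simp [pderiv_X, Pi.single_apply, apply_ite, mul_comm]
    rw [map_mul, Polynomial.derivative_mul, hX, hf, Finset.sum_mul, ← hsum,
      ← Finset.sum_add_distrib]
    refine Finset.sum_congr rfl fun j _ => ?_
    rw [pderiv_mul, map_add, map_mul, map_mul]
    ring

lemma eval_derivative_lineRestriction [Fintype σ] (u v : σ → R) (F : MvPolynomial σ R) (t : R) :
    (lineRestriction u v F).derivative.eval t = gradient F (u + t • v) ⬝ᵥ v := by
  simp [derivative_lineRestriction, Polynomial.eval_finsetSum, eval_lineRestriction, gradient,
    dotProduct, mul_comm]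

lemma natDegree_lineRestriction_le {F : MvPolynomial σ R} {n : ℕ} (hF : F.IsHomogeneous n)
    (u v : σ → R) : (lineRestriction u v F).natDegree ≤ n := by
  refine (aeval_natDegree_le F hF.totalDegree_le _ fun i => ?_).trans_eq (mul_one n)
  compute_degree

lemma coeff_lineRestriction {F : MvPolynomial σ R} {n : ℕ} (hF : F.IsHomogeneous n)
    (u v : σ → R) : (lineRestriction u v F).coeff n = eval v F := by
  have hprod {T : Type _} [CommRing T] (g : σ → T) (d : σ →₀ ℕ) :
      ∏ i ∈ d.support, g i ^ d i = (d.toMultiset.map g).prod := by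
    rw [Finsupp.toMultiset_map, Finsupp.prod_toMultiset,
      Finsupp.prod_mapDomain_index pow_zero pow_add, Finsupp.prod]
  rw [lineRestriction, aeval_def, eval₂_eq, Polynomial.finsetSum_coeff, eval_eq]
  refine Finset.sum_congr rfl fun d hd => ?_
  have hcard : Multiset.card (d.toMultiset.map fun i =>
      Polynomial.C (u i) + Polynomial.C (v i) * Polynomial.X) * 1 = n := by
    rw [Multiset.card_map, Finsupp.card_toMultiset, mul_one, hF.degree_eq_sum_deg_support hd]
    rfl
  rw [Polynomial.algebraMap_eq, Polynomial.coeff_C_mul, hprod, hprod, ← hcard,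
    Polynomial.coeff_multiset_prod_of_natDegree_le]
  · simp
  · simp only [Multiset.mem_map]
    rintro _ ⟨i, -, rfl⟩
    compute_degree

end LineRestriction

section Lines

variable {K : Type*} [Field K]

/-- The linear hyperplane with equation `l ⬝ᵥ x = 0`. -/
noncomputable def hyperplane {ι : Type*} [Fintype ι] [DecidableEq ι] (l : ι → K) :
    Submodule K (ι → K) :=
  LinearMap.ker (dotProductEquiv K ι l)

lemma mem_hyperplane {ι : Type*} [Fintype ι] [DecidableEq ι] {l x : ι → K} :
    x ∈ hyperplane l ↔ l ⬝ᵥ x = 0 := by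
  simp [hyperplane]

lemma finrank_hyperplane {m : ℕ} {l : Fin (m + 1) → K} (hl : l ≠ 0) :
    Module.finrank K (hyperplane l) = m := by
  have h := Module.Dual.finrank_ker_add_one_of_ne_zero
    ((dotProductEquiv K (Fin (m + 1))).map_ne_zero_iff.mpr hl)
  rw [Module.finrank_fin_fun] at h
  exact Nat.succ_injective h

lemma linearIndependent_pair_iff_not_projEq {n : ℕ} {p q : Fin n → K} (hp : p ≠ 0) (hq : q ≠ 0) :
    LinearIndependent K ![p, q] ↔ ¬ ProjEq p q := by
  rw [LinearIndependent.pair_iff' hp]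
  refine ⟨fun h ⟨c, _, hc⟩ => h c hc.symm, fun h c hc => h ⟨c, ?_, hc.symm⟩⟩
  rintro rfl
  exact hq (by rw [← hc, zero_smul])

lemma exists_eq_smul_add_smul {E : Type*} [AddCommGroup E] [Module K E] {V : Submodule K E}
    (hV : Module.finrank K V = 2) {u v y : E} (huv : LinearIndependent K ![u, v]) (hu : u ∈ V)
    (hv : v ∈ V) (hy : y ∈ V) : ∃ s t : K, y = s • u + t • v := by
  have : FiniteDimensional K V := Module.finite_of_finrank_eq_succ hV
  have hspan : Submodule.span K (Set.range ![u, v]) = V := by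
    refine Submodule.eq_of_le_of_finrank_eq ?_ ?_
    · simp [Submodule.span_le, Set.insert_subset_iff, hu, hv]
    · rw [finrank_span_eq_card huv, Fintype.card_fin, hV]
  rw [← hspan, Matrix.range_cons_cons_empty, Submodule.mem_span_pair] at hy
  obtain ⟨s, t, rfl⟩ := hy
  exact ⟨s, t, rfl⟩

lemma exists_mem_linearIndependent_pair {E : Type*} [AddCommGroup E] [Module K E]
    {V : Submodule K E} (hV : 1 < Module.finrank K V) {v : E} (hv : v ∈ V) (hv0 : v ≠ 0) :
    ∃ u ∈ V, LinearIndependent K ![u, v] := by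
  have : FiniteDimensional K V := Module.finite_of_finrank_pos (zero_lt_one.trans hV)
  have hv0' : (⟨v, hv⟩ : V) ≠ 0 := by simpa using hv0
  obtain ⟨u, hvu⟩ := exists_linearIndependent_pair_of_one_lt_finrank hV hv0'
  refine ⟨u, u.2, LinearIndependent.pair_symm_iff.mp ?_⟩
  simpa [LinearIndependent.pair_iff, Subtype.ext_iff] using hvu

lemma comp_eq_zero_iff {k ι : Type*} [Field k] (φ : k →+* K) {v : ι → k} : φ ∘ v = 0 ↔ v = 0 :=
  φ.injective.comp_left.eq_iff' (by ext; simp)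

lemma linearIndependent_pair_comp {k ι : Type*} [Field k] [Finite ι] (φ : k →+* K) {u v : ι → k}
    (huv : LinearIndependent k ![u, v]) : LinearIndependent K ![φ ∘ u, φ ∘ v] := by
  algebraize [φ]
  have hpair : ![φ ∘ u, φ ∘ v] = fun i => algebraMap k K ∘ ![u, v] i := by
    funext i
    fin_cases i <;> rfl
  rw [hpair]
  exact linearIndependent_algebraMap_comp_iff.mpr huv

lemma det_of_eq_zero_iff_exists_dotProduct_eq_zero (p q r : Fin 3 → K) :
    (Matrix.of ![p, q, r]).det = 0 ↔ ∃ l ≠ 0, l ⬝ᵥ p = 0 ∧ l ⬝ᵥ q = 0 ∧ l ⬝ᵥ r = 0 := by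
  rw [← Matrix.exists_mulVec_eq_zero_iff]
  refine exists_congr fun l => and_congr_right fun _ => ?_
  simp [funext_iff, Fin.forall_fin_succ, dotProduct_comm l]

lemma exists_injective_isRoot [IsAlgClosed K] {f : Polynomial K} {n : ℕ} (hf : f ≠ 0)
    (hdeg : f.natDegree = n) (hsimple : ∀ t, f.IsRoot t → ¬ f.derivative.IsRoot t) :
    ∃ t : Fin n → K, Function.Injective t ∧ ∀ i, f.IsRoot (t i) := by
  classical
  have hnodup : f.roots.Nodup := by
    refine Multiset.nodup_iff_count_le_one.mpr fun t => ?_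
    rw [Polynomial.count_roots]
    by_contra! h
    obtain ⟨h0, h1⟩ := (Polynomial.one_lt_rootMultiplicity_iff_isRoot hf).mp h
    exact hsimple t h0 h1
  have hcard : f.roots.toFinset.card = n := by
    rw [Multiset.toFinset_card_of_nodup hnodup, IsAlgClosed.card_roots_eq_natDegree, hdeg]
  let e := f.roots.toFinset.equivFinOfCardEq hcard
  exact ⟨fun i => e.symm i, Subtype.val_injective.comp e.symm.injective, fun i =>
    Polynomial.isRoot_of_mem_roots (Multiset.mem_toFinset.mp (e.symm i).2)⟩

/-- The hypersurface `H = 0` meets the projective space `ℙ(V)` transversally: at each common point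
the derivative of `H` along `V` does not vanish. -/
def MeetsTransversally {m : ℕ} (V : Submodule K (Fin m → K)) (H : MvPolynomial (Fin m) K) : Prop :=
  ∀ x ∈ V, x ≠ 0 → eval x H = 0 → ∃ y ∈ V, gradient H x ⬝ᵥ y ≠ 0

namespace MeetsTransversally

variable {m n : ℕ} {V : Submodule K (Fin m → K)} {H : MvPolynomial (Fin m) K}

lemma exists_eval_ne_zero [Infinite K] (h : MeetsTransversally V H) (hV : V ≠ ⊥) :
    ∃ v ∈ V, eval v H ≠ 0 := by
  by_contra! hzero
  obtain ⟨x, hx, hx0⟩ := V.exists_mem_ne_zero_of_ne_bot hV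
  obtain ⟨y, hy, hxy⟩ := h x hx hx0 (hzero x hx)
  have hline : lineRestriction x y H = 0 := Polynomial.funext fun t => by
    rw [eval_lineRestriction, hzero _ (V.add_mem hx (V.smul_mem t hy)), Polynomial.eval_zero]
  have hder := eval_derivative_lineRestriction x y H 0
  rw [hline, zero_smul, add_zero] at hder
  exact hxy (by simpa using hder.symm)

lemma eval_derivative_ne_zero (h : MeetsTransversally V H) (hH : H.IsHomogeneous n)
    (hV : Module.finrank K V = 2) {u v : Fin m → K} (huv : LinearIndependent K ![u, v])
    (hu : u ∈ V) (hv : v ∈ V) {t : K} (ht : (lineRestriction u v H).eval t = 0) :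
    (lineRestriction u v H).derivative.eval t ≠ 0 := by
  rw [eval_lineRestriction] at ht
  rw [eval_derivative_lineRestriction]
  intro hgrad
  set x := u + t • v
  have hxv : LinearIndependent K ![x, v] := by
    rwa [LinearIndependent.pair_add_smul_left_iff]
  obtain ⟨y, hy, hxy⟩ := h x (V.add_mem hu (V.smul_mem t hv)) (hxv.ne_zero 0) ht
  obtain ⟨a, b, rfl⟩ := exists_eq_smul_add_smul hV hxv (V.add_mem hu (V.smul_mem t hv)) hv hy
  -- By Euler's formula the gradient is orthogonal to `x` as well.
  refine hxy ?_
  rw [dotProduct_add, dotProduct_smul, dotProduct_smul, gradient_dotProduct_self hH, ht, hgrad]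
  simp

lemma exists_zeros [IsAlgClosed K] (h : MeetsTransversally V H) (hH : H.IsHomogeneous n)
    (hV : Module.finrank K V = 2) :
    ∃ x : Fin n → Fin m → K, (∀ i, x i ∈ V ∧ x i ≠ 0 ∧ eval (x i) H = 0) ∧
      ∀ i j, ProjEq (x i) (x j) → i = j := by
  rcases Nat.eq_zero_or_pos n with rfl | hn
  · exact ⟨Fin.elim0, fun i => i.elim0, fun i => i.elim0⟩
  obtain ⟨v, hv, hHv⟩ := h.exists_eval_ne_zero (by rintro rfl; simp at hV)
  have hv0 : v ≠ 0 := by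
    rintro rfl
    rw [← zero_smul K 0, eval_smul_of_isHomogeneous hH, zero_pow hn.ne', zero_mul] at hHv
    exact hHv rfl
  obtain ⟨u, hu, huv⟩ := exists_mem_linearIndependent_pair (hV.symm ▸ one_lt_two) hv hv0
  set f := lineRestriction u v H
  have hcoeff : f.coeff n ≠ 0 := by rwa [coeff_lineRestriction hH]
  have hdeg : f.natDegree = n :=
    (natDegree_lineRestriction_le hH u v).antisymm (Polynomial.le_natDegree_of_ne_zero hcoeff)
  have hf : f ≠ 0 := fun h0 => hcoeff (by rw [h0, Polynomial.coeff_zero])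
  obtain ⟨t, ht_inj, ht⟩ := exists_injective_isRoot hf hdeg fun t ht =>
    h.eval_derivative_ne_zero hH hV huv hu hv ht
  have hne (i : Fin n) : u + t i • v ≠ 0 :=
    ((LinearIndependent.pair_add_smul_left_iff (t i)).mpr huv).ne_zero 0
  refine ⟨fun i => u + t i • v, fun i => ⟨V.add_mem hu (V.smul_mem _ hv), hne i, ?_⟩, ?_⟩
  · rw [← eval_lineRestriction]
    exact ht i
  · intro i j hij
    by_contra hne'
    refine (linearIndependent_pair_iff_not_projEq (hne i) (hne j)).mp ?_ hij
    have hpair := (LinearIndependent.pair_add_smul_add_smul_iff (x := u) (y := v) 1 (t i) 1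
      (t j)).mpr ⟨huv, by simpa using ht_inj.ne (Ne.symm hne')⟩
    simpa only [one_smul] using hpair

end MeetsTransversally

end Lines

section Pencils

variable {k K : Type*} [Field k] [Field K]

lemma isHomogeneous_smul_add_smul {σ : Type*} {n : ℕ} {F₁ F₂ : MvPolynomial σ k}
    (hF₁ : F₁.IsHomogeneous n) (hF₂ : F₂.IsHomogeneous n) (a b : k) :
    (a • F₁ + b • F₂).IsHomogeneous n :=
  ((homogeneousSubmodule σ k n).smul_mem a hF₁).add ((homogeneousSubmodule σ k n).smul_mem b hF₂)

lemma exists_injective_dotProduct_eq_zero [IsAlgClosed K] (φ : k →+* K) {ι : Type*} {m n : ℕ}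
    {G H : MvPolynomial (Fin 3) k} (hG : G.IsHomogeneous m) (hH : H.IsHomogeneous n)
    {l : Fin 3 → k} (hl : l ≠ 0) (hlG : linearForm l ∣ G) {p : ι → Fin 3 → k}
    (htrans : ∀ i, TransverseAt G H (p i))
    (hall : ∀ q, q ≠ 0 → eval q (map φ G) = 0 → eval q (map φ H) = 0 → ∃ i, ProjEq (φ ∘ p i) q) :
    ∃ e : Fin n → ι, Function.Injective e ∧ ∀ a, l ⬝ᵥ p (e a) = 0 := by
  let V := hyperplane (φ ∘ l)
  have hl' : φ ∘ l ≠ 0 := (comp_eq_zero_iff φ).not.mpr hl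
  have hdvd : linearForm (φ ∘ l) ∣ map φ G := map_linearForm φ l ▸ map_dvd (map φ) hlG
  have hpoint (x) (hx : x ∈ V) (hx0 : x ≠ 0) (hxH : eval x (map φ H) = 0) :
      ∃ i, ProjEq (φ ∘ p i) x := by
    refine hall x hx0 ?_ hxH
    have hdvd_eval := map_dvd (eval x) hdvd
    rw [eval_linearForm, mem_hyperplane.mp hx] at hdvd_eval
    exact zero_dvd_iff.mp hdvd_eval
  have hV : MeetsTransversally V (map φ H) := by
    intro x hx hx0 hxH
    obtain ⟨i, c, hc, rfl⟩ := hpoint x hx hx0 hxH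
    obtain ⟨y, hy, hxy⟩ := (((htrans i).map φ.injective).smul (hG.map φ) (hH.map φ)
      hc).exists_gradient_dotProduct_ne_zero hdvd (mem_hyperplane.mp hx)
    exact ⟨y, mem_hyperplane.mpr hy, hxy⟩
  obtain ⟨x, hx, hx_inj⟩ := hV.exists_zeros (hH.map φ) (finrank_hyperplane hl')
  choose e c hc hxe using fun a => hpoint (x a) (hx a).1 (hx a).2.1 (hx a).2.2
  refine ⟨e, fun a b hab => hx_inj a b ⟨c b / c a, div_ne_zero (hc b) (hc a), ?_⟩, fun a => ?_⟩
  · rw [hxe, hxe, hab, smul_smul, div_mul_cancel₀ _ (hc a)]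
  · have hxa := mem_hyperplane.mp (hx a).1
    rw [hxe, dotProduct_smul, ← RingHom.map_dotProduct, smul_eq_zero_iff_right (hc a)] at hxa
    exact (map_eq_zero φ).mp hxa

lemma exists_injective_dotProduct_eq_zero_of_not_irreducible [IsAlgClosed K] (φ : k →+* K)
    {ι : Type*} [Nonempty ι] {n : ℕ} (hn0 : n ≠ 0) (hn : n ≤ 3) {F₁ F₂ : MvPolynomial (Fin 3) k}
    (hF₁ : F₁.IsHomogeneous n) (hF₂ : F₂.IsHomogeneous n) {p : ι → Fin 3 → k}
    (htrans : ∀ i, TransverseAt F₁ F₂ (p i))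
    (hall : ∀ q, q ≠ 0 → eval q (map φ F₁) = 0 → eval q (map φ F₂) = 0 →
      ∃ i, ProjEq (φ ∘ p i) q)
    {a b : k} (hab : ¬(a = 0 ∧ b = 0)) (hirr : ¬ Irreducible (a • F₁ + b • F₂)) :
    ∃ e : Fin n → ι, Function.Injective e ∧ ∃ l ≠ 0, ∀ i, l ⬝ᵥ p (e i) = 0 := by
  obtain ⟨c, d, hdet⟩ : ∃ c d, a * d - b * c ≠ 0 := by
    by_cases ha : a = 0
    · exact ⟨1, 0, by simpa [ha] using hab⟩
    · exact ⟨0, 1, by simpa using ha⟩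
  have hpencil := isHomogeneous_smul_add_smul hF₁ hF₂
  have htrans' (i) := (htrans i).linearCombination hdet
  have hG0 := (htrans' (Classical.arbitrary ι)).ne_zero_left
  obtain ⟨l, hl⟩ := exists_linearForm_dvd_of_not_irreducible (hpencil a b) hG0 hn0 hn hirr
  have hl0 : l ≠ 0 := by
    rintro rfl
    exact hG0 (zero_dvd_iff.mp (by simpa [linearForm] using hl))
  obtain ⟨e, he, hle⟩ := exists_injective_dotProduct_eq_zero φ (hpencil a b) (hpencil c d) hl0 hl
    htrans' fun q hq h₁ h₂ => by
      have hdet' : φ (a * d - b * c) ≠ 0 := (map_ne_zero φ).mpr hdet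
      simp only [smul_eq_C_mul, map_add, map_mul, map_C, eval_C] at h₁ h₂
      refine hall q hq ((mul_eq_zero_iff_left hdet').mp ?_) ((mul_eq_zero_iff_left hdet').mp ?_) <;>
        simp only [map_sub, map_mul]
      · linear_combination φ d * h₁ - φ b * h₂
      · linear_combination φ a * h₂ - φ c * h₁
  exact ⟨e, he, l, hl0, hle⟩

lemma exists_pencil_lineRestriction_eq_zero {σ : Type*} {n : ℕ} {F₁ F₂ : MvPolynomial σ k}
    (hF₁ : F₁.IsHomogeneous (n + 1)) (hF₂ : F₂.IsHomogeneous (n + 1)) {u v : σ → k}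
    (hv : eval v F₁ = 0 ∧ eval v F₂ = 0) {T : Finset k} (hT : n ≤ T.card)
    (huv : ∀ t ∈ T, eval (u + t • v) F₁ = 0 ∧ eval (u + t • v) F₂ = 0) :
    ∃ a b : k, ¬(a = 0 ∧ b = 0) ∧ lineRestriction u v (a • F₁ + b • F₂) = 0 := by
  obtain ⟨a, b, hab, hcoeff⟩ : ∃ a b : k, ¬(a = 0 ∧ b = 0) ∧
      a * (lineRestriction u v F₁).coeff n + b * (lineRestriction u v F₂).coeff n = 0 := by
    by_cases h : (lineRestriction u v F₁).coeff n = 0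
    · exact ⟨1, 0, by simp, by simp [h]⟩
    · exact ⟨(lineRestriction u v F₂).coeff n, -(lineRestriction u v F₁).coeff n, by simp [h],
        by ring⟩
  refine ⟨a, b, hab, ?_⟩
  have hG := isHomogeneous_smul_add_smul hF₁ hF₂ a b
  have hdeg : (lineRestriction u v (a • F₁ + b • F₂)).degree < T.card := by
    refine lt_of_lt_of_le ((Polynomial.degree_lt_iff_coeff_zero _ n).mpr fun m hm => ?_)
      (Nat.cast_le.mpr hT)
    obtain rfl | rfl | hm : m = n ∨ m = n + 1 ∨ n + 1 < m := by omega
    · simpa using hcoeff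
    · rw [coeff_lineRestriction hG]
      simp [hv]
    · exact Polynomial.coeff_eq_zero_of_natDegree_lt
        ((natDegree_lineRestriction_le hG u v).trans_lt hm)
  refine Polynomial.eq_zero_of_degree_lt_of_eval_finset_eq_zero T hdeg fun t ht => ?_
  simp [eval_lineRestriction, huv t ht]

lemma linearForm_dvd_of_lineRestriction_eq_zero {G : MvPolynomial (Fin 3) k} {n : ℕ}
    (hG : G.IsHomogeneous n) {u v l : Fin 3 → k} (huv : LinearIndependent k ![u, v])
    (hl : l ≠ 0) (hlu : l ⬝ᵥ u = 0) (hlv : l ⬝ᵥ v = 0) (hline : lineRestriction u v G = 0) :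
    linearForm l ∣ G := by
  -- `k` may have too few elements for `G` to be determined by its values on `k`-points.
  let φ := algebraMap k (AlgebraicClosure k)
  refine linearForm_dvd_of_forall_eval_eq_zero φ hl fun x hx => ?_
  have hl' : φ ∘ l ≠ 0 := (comp_eq_zero_iff φ).not.mpr hl
  have hmem {y : Fin 3 → k} (hy : l ⬝ᵥ y = 0) : φ ∘ y ∈ hyperplane (φ ∘ l) :=
    mem_hyperplane.mpr (by rw [← RingHom.map_dotProduct, hy, map_zero])
  obtain ⟨s, t, rfl⟩ := exists_eq_smul_add_smul (V := hyperplane (φ ∘ l)) (finrank_hyperplane hl')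
    (linearIndependent_pair_comp φ huv) (hmem hlu) (hmem hlv) (mem_hyperplane.mpr hx)
  have hline' : lineRestriction (φ ∘ u) (φ ∘ v) (map φ G) = 0 := by
    rw [← map_lineRestriction, hline, Polynomial.map_zero]
  rcases eq_or_ne s 0 with rfl | hs
  · rw [zero_smul, zero_add, eval_smul_of_isHomogeneous (hG.map φ),
      ← coeff_lineRestriction (hG.map φ) (φ ∘ u), hline', Polynomial.coeff_zero, mul_zero]
  · have hx' : s • φ ∘ u + t • φ ∘ v = s • (φ ∘ u + (t / s) • φ ∘ v) := by
      rw [smul_add, smul_smul, mul_div_cancel₀ t hs]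
    rw [hx', eval_smul_of_isHomogeneous (hG.map φ), ← eval_lineRestriction, hline',
      Polynomial.eval_zero, mul_zero]

lemma exists_not_irreducible_of_dotProduct_eq_zero {F₁ F₂ : MvPolynomial (Fin 3) k}
    (hF₁ : F₁.IsHomogeneous 3) (hF₂ : F₂.IsHomogeneous 3) {p q r l : Fin 3 → k}
    (hpq : LinearIndependent k ![p, q]) (hqr : LinearIndependent k ![q, r])
    (hpr : LinearIndependent k ![p, r]) (hp : eval p F₁ = 0 ∧ eval p F₂ = 0)
    (hq : eval q F₁ = 0 ∧ eval q F₂ = 0) (hr : eval r F₁ = 0 ∧ eval r F₂ = 0)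
    (hl : l ≠ 0) (hlp : l ⬝ᵥ p = 0) (hlq : l ⬝ᵥ q = 0) (hlr : l ⬝ᵥ r = 0) :
    ∃ a b : k, ¬(a = 0 ∧ b = 0) ∧ ¬ Irreducible (a • F₁ + b • F₂) := by
  classical
  obtain ⟨s, t, hst⟩ := exists_eq_smul_add_smul (V := hyperplane l) (finrank_hyperplane hl) hpq
    (mem_hyperplane.mpr hlp) (mem_hyperplane.mpr hlq) (mem_hyperplane.mpr hlr)
  have hs : s ≠ 0 := by
    rintro rfl
    exact (LinearIndependent.pair_iff' (hqr.ne_zero 0)).mp hqr t (by simp [hst])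
  have ht : t ≠ 0 := by
    rintro rfl
    exact (LinearIndependent.pair_iff' (hpr.ne_zero 0)).mp hpr s (by simp [hst])
  have hr' : p + (t / s) • q = s⁻¹ • r := by
    rw [hst, smul_add, smul_smul, smul_smul, inv_mul_cancel₀ hs, one_smul, inv_mul_eq_div]
  obtain ⟨a, b, hab, hline⟩ := exists_pencil_lineRestriction_eq_zero hF₁ hF₂ hq (u := p)
    (T := {0, t / s}) (by rw [Finset.card_pair (div_ne_zero ht hs).symm]) (by
      simp [hr', eval_smul_of_isHomogeneous hF₁, eval_smul_of_isHomogeneous hF₂, hp, hr])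
  have hG := isHomogeneous_smul_add_smul hF₁ hF₂ a b
  exact ⟨a, b, hab, not_irreducible_of_linearForm_dvd hG (by norm_num)
    (linearForm_dvd_of_lineRestriction_eq_zero hG hpq hl hlp hlq hline)⟩

end Pencils

end CubicPencil

/-- Let `C₁`, `C₂` be cubics in `ℙ²` over `k` whose intersection is transverse and consists of
9 distinct `k`-rational points `p₁, …, p₉` (these being all the intersection points over the
algebraic closure).  Then no three of the points lie on a line if and only if every nonzero
cubic in the pencil spanned by `C₁` and `C₂` is irreducible. -/
theorem cubic_pencil_irreducible_iff_no_collinear_triple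
    {k : Type*} [Field k]
    (F₁ F₂ : MvPolynomial (Fin 3) k)
    (hF₁ : F₁.IsHomogeneous 3) (hF₂ : F₂.IsHomogeneous 3)
    (p : Fin 9 → (Fin 3 → k)) (hp0 : ∀ i, p i ≠ 0)
    (hdist : ∀ i j, i ≠ j → ¬ ProjEq (p i) (p j))
    (hzero : ∀ i, eval (p i) F₁ = 0 ∧ eval (p i) F₂ = 0)
    (hall : ∀ q : Fin 3 → AlgebraicClosure k, q ≠ 0 →
      eval q (map (algebraMap k (AlgebraicClosure k)) F₁) = 0 →
      eval q (map (algebraMap k (AlgebraicClosure k)) F₂) = 0 →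
      ∃ i, ProjEq (fun j => algebraMap k (AlgebraicClosure k) (p i j)) q)
    (htrans : ∀ i, ∃ a b : Fin 3,
      eval (p i) (pderiv a F₁) * eval (p i) (pderiv b F₂) ≠
      eval (p i) (pderiv b F₁) * eval (p i) (pderiv a F₂)) :
    (∀ i j l : Fin 9, i ≠ j → j ≠ l → i ≠ l →
        Matrix.det (Matrix.of ![p i, p j, p l]) ≠ 0) ↔
    (∀ a b : k, ¬(a = 0 ∧ b = 0) → Irreducible (a • F₁ + b • F₂)) := by
  have hindep {i j : Fin 9} (hij : i ≠ j) : LinearIndependent k ![p i, p j] :=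
    (CubicPencil.linearIndependent_pair_iff_not_projEq (hp0 i) (hp0 j)).mpr (hdist i j hij)
  constructor
  · intro hdet a b hab
    by_contra hirr
    obtain ⟨e, he, l, hl, hle⟩ :=
      CubicPencil.exists_injective_dotProduct_eq_zero_of_not_irreducible
        (algebraMap k (AlgebraicClosure k)) three_ne_zero le_rfl hF₁ hF₂ htrans hall hab hirr
    exact hdet (e 0) (e 1) (e 2) (he.ne (by decide)) (he.ne (by decide)) (he.ne (by decide))
      ((CubicPencil.det_of_eq_zero_iff_exists_dotProduct_eq_zero _ _ _).mpr
        ⟨l, hl, hle 0, hle 1, hle 2⟩)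
  · intro hirr i j m hij hjm him hdet
    obtain ⟨l, hl, hli, hlj, hlm⟩ :=
      (CubicPencil.det_of_eq_zero_iff_exists_dotProduct_eq_zero _ _ _).mp hdet
    obtain ⟨a, b, hab, hred⟩ := CubicPencil.exists_not_irreducible_of_dotProduct_eq_zero hF₁ hF₂
      (hindep hij) (hindep hjm) (hindep him) (hzero i) (hzero j) (hzero m) hl hli hlj hlm
    exact hred (hirr a b hab)
end

section
/- Let p1,...,p8 be 8 distinct points in P^3 over a field k which are the transverse intersection of three quadrics Q1, Q2, Q3. Then no four of the points lie on a plane if and only if every nonzero quadric in the net spanned by Q1, Q2, Q3 is irreducible. -/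
open MvPolynomial

/-!
A reducible quadric of `ℙ³` is a pair of planes, and of seven points on it at least four lie on the
same one of the two planes. Conversely, no line joining two base points lies in the base locus,
which is finite. Hence no three base points are collinear: a quadric meeting a line in three points
contains it. If the base points `x₀, …, x₃` lie on a plane `H`, some nonzero member of the net
contains the two points `x₀ + x₁` and `x₀ + x₂` of `H`. It then contains the lines `x₀x₁` and
`x₀x₂`, so it cuts `H` in these two lines unless it contains `H`. As `x₃` lies on neither line, it
contains `H` and is therefore reducible.
-/

namespace QuadricNet

open QuadraticMap

section Factorization

variable {σ R k : Type*} [CommSemiring R] [Field k]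

lemma homogeneousComponent_add_mul {F G : MvPolynomial σ R} {m n : ℕ}
    (hF : F.totalDegree ≤ m) (hG : G.totalDegree ≤ n) :
    homogeneousComponent (m + n) (F * G) =
      homogeneousComponent m F * homogeneousComponent n G := by
  classical
  have coeff_eq_zero {P : MvPolynomial σ R} {r : ℕ} (hP : P.totalDegree ≤ r) {d : σ →₀ ℕ}
      (hd : r < d.degree) : coeff d P = 0 :=
    coeff_eq_zero_of_totalDegree_lt (hP.trans_lt hd)
  ext d
  simp only [coeff_homogeneousComponent, coeff_mul, Finset.ite_sum_zero]
  refine Finset.sum_congr rfl fun ⟨d₁, d₂⟩ hd => ?_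
  obtain rfl : d₁ + d₂ = d := Finset.HasAntidiagonal.mem_antidiagonal.mp hd
  rw [map_add]
  rcases lt_trichotomy d₁.degree m with h₁ | h₁ | h₁
  · rcases lt_or_ge n d₂.degree with h₂ | h₂
    · simp [coeff_eq_zero hG h₂]
    · rw [if_neg (by lia), if_neg (by lia), zero_mul]
  · simp [h₁]
  · simp [coeff_eq_zero hF h₁]

lemma isHomogeneous_sum_smul {κ : Type*} [Fintype κ] {Q : κ → MvPolynomial σ R} {n : ℕ}
    (hQ : ∀ m, (Q m).IsHomogeneous n) (a : κ → R) : (∑ m, a m • Q m).IsHomogeneous n :=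
  Submodule.sum_smul_mem (homogeneousSubmodule σ R n) a fun m _ => hQ m

lemma exists_eq_mul_of_not_irreducible {F : MvPolynomial σ k} {n : ℕ}
    (hF : F.IsHomogeneous n) (hn : n ≠ 0) (hF0 : F ≠ 0) (hirr : ¬ Irreducible F) :
    ∃ a b : ℕ, a ≠ 0 ∧ b ≠ 0 ∧ a + b = n ∧
      ∃ G H : MvPolynomial σ k, G.IsHomogeneous a ∧ H.IsHomogeneous b ∧ F = G * H := by
  have totalDegree_ne_zero {P : MvPolynomial σ k} (hP : P ≠ 0) (hPu : ¬ IsUnit P) :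
      P.totalDegree ≠ 0 := fun hdeg => hPu <| by
    rw [totalDegree_eq_zero_iff_eq_C.mp hdeg] at hP ⊢
    exact (isUnit_iff_ne_zero.mpr fun h => hP (by rw [h, C_0])).map C
  have hFu : ¬ IsUnit F := fun hu =>
    hn ((hF.totalDegree hF0).symm.trans (isUnit_iff_totalDegree_of_isReduced.mp hu).2)
  obtain ⟨G, H, rfl, hGu, hHu⟩ : ∃ G H, F = G * H ∧ ¬ IsUnit G ∧ ¬ IsUnit H := by
    simpa [irreducible_iff, hFu] using hirr
  obtain ⟨hG0, hH0⟩ := mul_ne_zero_iff.mp hF0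
  have hdeg : G.totalDegree + H.totalDegree = n :=
    (totalDegree_mul_of_isDomain hG0 hH0).symm.trans (hF.totalDegree hF0)
  refine ⟨_, _, totalDegree_ne_zero hG0 hGu, totalDegree_ne_zero hH0 hHu, hdeg, _, _,
    homogeneousComponent_isHomogeneous _ G, homogeneousComponent_isHomogeneous _ H, ?_⟩
  rw [← homogeneousComponent_add_mul le_rfl le_rfl, hdeg, homogeneousComponent_eq_self hF]

lemma not_irreducible_of_dvd_of_lt {F L : MvPolynomial σ k} {m n : ℕ} (hF : F.IsHomogeneous n)
    (hL : L.IsHomogeneous m) (hm : m ≠ 0) (hmn : m < n) (hdvd : L ∣ F) : ¬ Irreducible F := by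
  intro hirr
  obtain ⟨G, rfl⟩ := hdvd
  obtain ⟨hL0, hG0⟩ := mul_ne_zero_iff.mp hirr.ne_zero
  have hdeg : m + G.totalDegree = n := by
    rw [← hL.totalDegree hL0, ← totalDegree_mul_of_isDomain hL0 hG0, hF.totalDegree hirr.ne_zero]
  rcases hirr.isUnit_or_isUnit rfl with hu | hu
  · exact hm ((hL.totalDegree hL0).symm.trans (isUnit_iff_totalDegree_of_isReduced.mp hu).2)
  · have := (isUnit_iff_totalDegree_of_isReduced.mp hu).2
    lia

end Factorization

section LinearForm

variable {σ R A : Type*} [Fintype σ] [CommSemiring R] [CommSemiring A] [Algebra R A]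

/-- The linear form in the variables `X i` with coefficient vector `c`. -/
noncomputable def linearForm (c : σ → R) : MvPolynomial σ R :=
  ∑ i, c i • X i

lemma isHomogeneous_linearForm (c : σ → R) : (linearForm c).IsHomogeneous 1 :=
  isHomogeneous_sum_smul (isHomogeneous_X R) c

lemma aeval_linearForm (c : σ → R) (x : σ → A) : aeval x (linearForm c) = ∑ i, c i • x i := by
  simp only [linearForm, map_sum, map_smul, aeval_X]

lemma eval_linearForm (c x : σ → R) : eval x (linearForm c) = c ⬝ᵥ x := by
  simp only [linearForm, map_sum, smul_eval, eval_X, dotProduct]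

lemma exists_eq_linearForm {L : MvPolynomial σ R} (hL : L.IsHomogeneous 1) :
    ∃ c, L = linearForm c := by
  rw [← mem_homogeneousSubmodule, homogeneousSubmodule_one_eq_span_X,
    Submodule.mem_span_range_iff_exists_fun] at hL
  obtain ⟨c, rfl⟩ := hL
  exact ⟨c, rfl⟩

end LinearForm

section Polar

variable {R M : Type*} [CommRing R] [AddCommGroup M] [Module R M] {q : QuadraticForm R M}
  {u v w : M}

lemma linearIndependent_triple_iff : LinearIndependent R ![u, v, w] ↔
    ∀ a b c : R, a • u + b • v + c • w = 0 → a = 0 ∧ b = 0 ∧ c = 0 := by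
  simp [Fintype.linearIndependent_iff, Fin.sum_univ_three, Fin.forall_fin_succ_pi,
    Fin.forall_fin_succ]

lemma map_eq_zero_of_mem_span {s : Set M} (hs : ∀ x ∈ s, q x = 0)
    (hadd : ∀ x ∈ s, ∀ y ∈ s, q (x + y) = 0) {x : M} (hx : x ∈ Submodule.span R s) : q x = 0 := by
  have polar_eq_zero {y z : M} (hy : y ∈ Submodule.span R s) (hz : z ∈ Submodule.span R s) :
      polar q y z = 0 := by
    induction hy, hz using Submodule.span_induction₂ with
    | mem_mem y z hy hz => simp [polar, hs y hy, hs z hz, hadd y hy z hz]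
    | zero_left z => simp
    | zero_right y => simp
    | add_left x y z _ _ _ hx hy => simp [hx, hy]
    | add_right x y z _ _ _ hx hy => simp [hx, hy]
    | smul_left r x y _ _ h => simp [h]
    | smul_right r x y _ _ h => simp [h]
  induction hx using Submodule.span_induction with
  | mem x hx => exact hs x hx
  | zero => exact q.map_zero
  | add x y hx hy hqx hqy => rw [QuadraticMap.map_add q x y, hqx, hqy, polar_eq_zero hx hy]; simp
  | smul a x hx hqx => rw [QuadraticMap.map_smul, hqx, smul_zero]

lemma polar_ne_zero_of_mem_span_pair (hu : q u = 0) (hv : q v = 0) {y : M}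
    (hy : y ∈ Submodule.span R {u, v}) (hqy : q y ≠ 0) : polar q u v ≠ 0 := by
  obtain ⟨a, b, rfl⟩ := Submodule.mem_span_pair.mp hy
  intro huv
  exact hqy (by simp [QuadraticMap.map_add q, QuadraticMap.map_smul, hu, hv, huv])

end Polar

section QuadraticForm

variable {σ R A : Type*} [Finite σ] [CommRing R] {F : MvPolynomial σ R}

lemma exists_quadraticForm_eq_aeval (hF : F.IsHomogeneous 2) (A : Type*) [CommRing A]
    [Algebra R A] : ∃ q : QuadraticForm A (σ → A), ∀ x, q x = aeval x F := by
  have := Fintype.ofFinite σ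
  rw [← mem_homogeneousSubmodule, ← homogeneousSubmodule_one_pow, pow_two] at hF
  induction hF using Submodule.mul_induction_on' with
  | mem_mul_mem L₁ h₁ L₂ h₂ =>
    obtain ⟨c, rfl⟩ := exists_eq_linearForm h₁
    obtain ⟨d, rfl⟩ := exists_eq_linearForm h₂
    let ℓ (e : σ → R) : (σ → A) →ₗ[A] A := ∑ i, e i • LinearMap.proj i
    exact ⟨linMulLin (ℓ c) (ℓ d), fun x => by simp [ℓ, aeval_linearForm]⟩
  | add G _ H _ hG hH =>
    obtain ⟨q₁, hq₁⟩ := hG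
    obtain ⟨q₂, hq₂⟩ := hH
    exact ⟨q₁ + q₂, fun x => by simp [hq₁, hq₂]⟩

/-- The quadratic form `x ↦ F(x)` on `A ^ σ` defined by a homogeneous polynomial `F` of degree 2
with coefficients in `R`. The `R`-algebra `A` is arbitrary so that `F` can be evaluated at
points over an extension field and at the generic point `X` over the polynomial ring. -/
noncomputable def quadraticForm (hF : F.IsHomogeneous 2) (A : Type*) [CommRing A] [Algebra R A] :
    QuadraticForm A (σ → A) :=
  (exists_quadraticForm_eq_aeval hF A).choose

variable [CommRing A] [Algebra R A]

lemma quadraticForm_apply (hF : F.IsHomogeneous 2) (x : σ → A) :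
    quadraticForm hF A x = aeval x F :=
  (exists_quadraticForm_eq_aeval hF A).choose_spec x

lemma quadraticForm_self_apply (hF : F.IsHomogeneous 2) (x : σ → R) :
    quadraticForm hF R x = eval x F := by
  rw [quadraticForm_apply, ← coe_aeval_eq_eval, RingHom.coe_coe]

lemma quadraticForm_algebraMap_comp (hF : F.IsHomogeneous 2) (x : σ → R) :
    quadraticForm hF A (algebraMap R A ∘ x) = algebraMap R A (eval x F) := by
  rw [quadraticForm_apply, aeval_algebraMap_apply, ← quadraticForm_apply hF,
    quadraticForm_self_apply]

lemma quadraticForm_eq_zero_of_mem_span (hF : F.IsHomogeneous 2) {W : Submodule R (σ → R)}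
    (hW : ∀ x ∈ W, eval x F = 0) {x : σ → A}
    (hx : x ∈ Submodule.span A ((algebraMap R A ∘ ·) '' (W : Set (σ → R)))) :
    quadraticForm hF A x = 0 := by
  refine map_eq_zero_of_mem_span ?_ ?_ hx
  · rintro _ ⟨y, hy, rfl⟩
    simp only [quadraticForm_algebraMap_comp, hW y hy, map_zero]
  · rintro _ ⟨y, hy, rfl⟩ _ ⟨z, hz, rfl⟩
    have hyz : algebraMap R A ∘ y + algebraMap R A ∘ z = algebraMap R A ∘ (y + z) := by
      ext; simp
    simp only [hyz, quadraticForm_algebraMap_comp, hW _ (W.add_mem hy hz), map_zero]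

end QuadraticForm

section Isotropic

variable {k V : Type*} [Field k] [AddCommGroup V] [Module k V] {q : QuadraticForm k V} {u v w : V}

lemma mul_eq_zero_of_smul_add_smul_add_smul_eq_zero (hu : q u = 0) (hv : q v = 0) (hw : q w = 0)
    (huv : polar q u v ≠ 0) {a b c : k} (h : a • u + b • v + c • w = 0) : a * b = 0 := by
  have hq : q (a • u + b • v) = 0 := by
    rw [eq_neg_of_add_eq_zero_left h, QuadraticMap.map_neg, QuadraticMap.map_smul, hw, smul_zero]
  simpa [QuadraticMap.map_add q, QuadraticMap.map_smul, hu, hv, huv, or_comm] using hq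

lemma linearIndependent_triple_of_polar_ne_zero {κ : Type*} {q : κ → QuadraticForm k V}
    (hu : ∀ m, q m u = 0) (hv : ∀ m, q m v = 0) (hw : ∀ m, q m w = 0)
    (huv : ∃ m, polar (q m) u v ≠ 0) (huw : ∃ m, polar (q m) u w ≠ 0)
    (hvw : ∃ m, polar (q m) v w ≠ 0) : LinearIndependent k ![u, v, w] := by
  obtain ⟨m₁, huv⟩ := huv
  obtain ⟨m₂, huw⟩ := huw
  obtain ⟨m₃, hvw⟩ := hvw
  have hu0 : u ≠ 0 := by rintro rfl; simp at huv
  have hv0 : v ≠ 0 := by rintro rfl; simp at huv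
  have hw0 : w ≠ 0 := by rintro rfl; simp at huw
  rw [linearIndependent_triple_iff]
  intro a b c h
  have hab := mul_eq_zero_of_smul_add_smul_add_smul_eq_zero (hu _) (hv _) (hw _) huv h
  have hac := mul_eq_zero_of_smul_add_smul_add_smul_eq_zero (hu _) (hw _) (hv _) huw
    ((add_right_comm _ _ _).trans h)
  have hbc := mul_eq_zero_of_smul_add_smul_add_smul_eq_zero (hv _) (hw _) (hu _) hvw
    ((add_rotate _ _ _).symm.trans h)
  rcases mul_eq_zero.mp hab with rfl | rfl
  · rcases mul_eq_zero.mp hbc with rfl | rfl <;> simp_all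
  · rcases mul_eq_zero.mp hac with rfl | rfl <;> simp_all

lemma smul_add_smul_ne_of_polar_ne_zero {κ : Type*} {q : κ → QuadraticForm k V}
    (hu : ∀ m, q m u = 0) (hv : ∀ m, q m v = 0) (hw : ∀ m, q m w = 0)
    (huw : ∃ m, polar (q m) u w ≠ 0) (hvw : ∃ m, polar (q m) v w ≠ 0) (a b : k) :
    a • u + b • v ≠ w := by
  rintro rfl
  obtain ⟨m₁, h₁⟩ := huw
  obtain ⟨m₂, h₂⟩ := hvw
  have ⟨hb, huv⟩ : b ≠ 0 ∧ polar (q m₁) u v ≠ 0 := by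
    simpa [hu] using h₁
  have ⟨ha, _⟩ : a ≠ 0 ∧ polar (q m₂) v u ≠ 0 := by
    simpa [hv] using h₂
  have hab : a * b * polar (q m₁) u v = 0 := by
    simpa [QuadraticMap.map_add (q m₁), QuadraticMap.map_smul, hu, hv, mul_assoc,
      mul_left_comm] using hw m₁
  exact mul_ne_zero (mul_ne_zero ha hb) huv hab

lemma map_eq_zero_of_mem_span_triple {x : V} (hu : q u = 0) (hv : q v = 0) (hw : q w = 0)
    (huv : polar q u v = 0) (huw : polar q u w = 0) {a b c : k} (hb : b ≠ 0) (hc : c ≠ 0)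
    (hz : q (a • u + b • v + c • w) = 0) (hx : x ∈ Submodule.span k {u, v, w}) : q x = 0 := by
  have map_combination (a b c : k) : q (a • u + b • v + c • w) = b * c * polar q v w := by
    simp [QuadraticMap.map_add q, QuadraticMap.map_smul, hu, hv, hw, huv, huw, mul_assoc,
      mul_left_comm]
  have hvw : polar q v w = 0 := by
    simpa [map_combination, hb, hc] using hz
  obtain ⟨a, b, c, rfl⟩ := Submodule.mem_span_triple.mp hx
  rw [map_combination, hvw, mul_zero]

lemma exists_ne_zero_forall_dotProduct_eq_zero {ι κ : Type*} [Fintype ι] [Fintype κ]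
    (h : Fintype.card ι < Fintype.card κ) (f : ι → κ → k) :
    ∃ a : κ → k, a ≠ 0 ∧ ∀ i, a ⬝ᵥ f i = 0 := by
  obtain ⟨a, ha, ha0⟩ := Submodule.exists_mem_ne_zero_of_ne_bot
    (LinearMap.ker_ne_bot_of_finrank_lt (f := (Matrix.of f).mulVecLin) (by simpa using h))
  exact ⟨a, ha0, fun i => (dotProduct_comm _ _).trans (congrFun ha i)⟩

lemma exists_combination_eq_zero_on_span_triple {κ : Type*} [Fintype κ] (hκ : 2 < Fintype.card κ)
    {q : κ → QuadraticForm k V} {x : Fin 4 → V} (hx : ∀ i m, q m (x i) = 0)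
    (hpolar : ∀ i j, i ≠ j → ∃ m, polar (q m) (x i) (x j) ≠ 0)
    (hmem : x 3 ∈ Submodule.span k {x 0, x 1, x 2}) :
    ∃ a : κ → k, a ≠ 0 ∧ ∀ y ∈ Submodule.span k {x 0, x 1, x 2}, ∑ m, a m * q m y = 0 := by
  obtain ⟨b₀, b₁, b₂, hb⟩ := Submodule.mem_span_triple.mp hmem
  have hb₁ : b₁ ≠ 0 := by
    rintro rfl
    exact smul_add_smul_ne_of_polar_ne_zero (hx 0) (hx 2) (hx 3)
      (hpolar 0 3 (by decide)) (hpolar 2 3 (by decide)) b₀ b₂ (by simpa using hb)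
  have hb₂ : b₂ ≠ 0 := by
    rintro rfl
    exact smul_add_smul_ne_of_polar_ne_zero (hx 0) (hx 1) (hx 3)
      (hpolar 0 3 (by decide)) (hpolar 1 3 (by decide)) b₀ b₁ (by simpa using hb)
  obtain ⟨a, ha0, ha⟩ := exists_ne_zero_forall_dotProduct_eq_zero (by simpa using hκ)
    ![fun m => polar (q m) (x 0) (x 1), fun m => polar (q m) (x 0) (x 2)]
  let q' : QuadraticForm k V := ∑ m, a m • q m
  have q'_apply (y : V) : q' y = ∑ m, a m * q m y := by
    simp [q']
  have hq' (i : Fin 4) : q' (x i) = 0 := by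
    simp [q'_apply, hx]
  have polar_q' (y z : V) : polar q' y z = ∑ m, a m * polar (q m) y z := by
    simp only [polar, q'_apply, mul_sub, Finset.sum_sub_distrib]
  have h₁ : polar q' (x 0) (x 1) = 0 := (polar_q' _ _).trans (ha 0)
  have h₂ : polar q' (x 0) (x 2) = 0 := (polar_q' _ _).trans (ha 1)
  refine ⟨a, ha0, fun y hy => q'_apply y ▸ ?_⟩
  exact map_eq_zero_of_mem_span_triple (hq' 0) (hq' 1) (hq' 2) h₁ h₂ hb₁ hb₂ (hb ▸ hq' 3) hy

end Isotropic

section CoplanarPoints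

variable {σ κ ι k : Type*} [Field k]

/-- With `z` a point where `L := linearForm c` takes the value `1`, the generic point decomposes as
`X = (X - L • z) + L • z`, and `X - L • z` lies on the hyperplane `L = 0`. -/
lemma linearForm_dvd_of_eval_eq_zero [Fintype σ] {F : MvPolynomial σ k}
    (hF : F.IsHomogeneous 2) {c : σ → k} (hc : c ≠ 0)
    (h : ∀ x, c ⬝ᵥ x = 0 → eval x F = 0) : linearForm c ∣ F := by
  classical
  obtain ⟨i, hi⟩ : ∃ i, c i ≠ 0 := Function.ne_iff.mp hc
  let z₀ : σ → k := Pi.single i (c i)⁻¹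
  have hz₀ : c ⬝ᵥ z₀ = 1 := by simp [z₀, hi]
  let z : σ → MvPolynomial σ k := algebraMap k _ ∘ z₀
  let W := LinearMap.ker (dotProductEquiv k σ c)
  have hXz : X - linearForm c • z ∈
      Submodule.span (MvPolynomial σ k) ((algebraMap k _ ∘ ·) '' (W : Set (σ → k))) := by
    have hsum : X - linearForm c • z =
        ∑ j, X (R := k) j • (algebraMap k (MvPolynomial σ k) ∘ (Pi.single j 1 - c j • z₀)) := by
      ext i : 1
      simp [linearForm, z, mul_sub, Finset.sum_mul, smul_eq_C_mul, Pi.single_apply, algebraMap_eq,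
        mul_assoc, mul_left_comm]
    rw [hsum]
    refine Submodule.sum_mem _ fun j _ => Submodule.smul_mem _ _ (Submodule.subset_span ?_)
    exact ⟨_, by simp [W, hz₀], rfl⟩
  have hq : quadraticForm hF (MvPolynomial σ k) (X - linearForm c • z) = 0 :=
    quadraticForm_eq_zero_of_mem_span hF (fun x hx => h x (by simpa [W] using hx)) hXz
  have hFX : F = quadraticForm hF (MvPolynomial σ k) (X - linearForm c • z + linearForm c • z) := by
    rw [sub_add_cancel, quadraticForm_apply, aeval_X_left_apply]
  rw [hFX, QuadraticMap.map_add (quadraticForm hF _), hq, QuadraticMap.map_smul, polar_smul_right]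
  exact ⟨linearForm c * quadraticForm hF _ z + polar (quadraticForm hF _) (X - linearForm c • z) z,
    by simp only [smul_eq_mul]; ring⟩

lemma mem_span_range_of_dotProduct_eq_zero [Fintype σ] [Fintype ι] {v : ι → σ → k}
    (hv : LinearIndependent k v) (hcard : Fintype.card ι + 1 = Fintype.card σ) {c : σ → k}
    (hc : c ≠ 0) (hcv : ∀ i, c ⬝ᵥ v i = 0) {x : σ → k} (hcx : c ⬝ᵥ x = 0) :
    x ∈ Submodule.span k (Set.range v) := by
  classical
  let H := LinearMap.ker (dotProductEquiv k σ c)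
  have hH : Module.finrank k H + 1 = Fintype.card σ := by
    rw [Module.Dual.finrank_ker_add_one_of_ne_zero (by simpa using hc), Module.finrank_pi]
  have hle : Submodule.span k (Set.range v) ≤ H :=
    Submodule.span_le.mpr (Set.range_subset_iff.mpr fun i => by simpa [H] using hcv i)
  rw [Submodule.eq_of_le_of_finrank_eq hle (by rw [finrank_span_eq_card hv]; lia)]
  simpa [H] using hcx

lemma exists_forall_dotProduct_eq_zero_iff_det_eq_zero [Fintype σ] [DecidableEq σ]
    {x : σ → σ → k} :
    (∃ c : σ → k, c ≠ 0 ∧ ∀ i, c ⬝ᵥ x i = 0) ↔ (Matrix.of x).det = 0 := by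
  simp only [← Matrix.exists_mulVec_eq_zero_iff, funext_iff, dotProduct_comm _ (x _)]
  rfl

lemma exists_linearForm_dvd_sum [Fintype σ] (hσ : Fintype.card σ = 4) [Fintype κ]
    (hκ : 2 < Fintype.card κ) {Q : κ → MvPolynomial σ k} (hQ : ∀ m, (Q m).IsHomogeneous 2)
    {x : Fin 4 → σ → k} (hzero : ∀ i m, eval (x i) (Q m) = 0)
    (hline : ∀ i j, i ≠ j → ∃ y ∈ Submodule.span k {x i, x j}, ∃ m, eval y (Q m) ≠ 0)
    {c : σ → k} (hc : c ≠ 0) (hcx : ∀ i, c ⬝ᵥ x i = 0) :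
    ∃ a : κ → k, a ≠ 0 ∧ linearForm c ∣ ∑ m, a m • Q m := by
  let q (m : κ) : QuadraticForm k (σ → k) := quadraticForm (hQ m) k
  have hqx (i : Fin 4) (m : κ) : q m (x i) = 0 := by
    rw [quadraticForm_self_apply, hzero]
  have hpolar (i j : Fin 4) (hij : i ≠ j) : ∃ m, polar (q m) (x i) (x j) ≠ 0 := by
    obtain ⟨y, hy, m, hm⟩ := hline i j hij
    rw [← quadraticForm_self_apply (hQ m)] at hm
    exact ⟨m, polar_ne_zero_of_mem_span_pair (hqx i m) (hqx j m) hy hm⟩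
  have hli : LinearIndependent k ![x 0, x 1, x 2] :=
    linearIndependent_triple_of_polar_ne_zero (hqx 0) (hqx 1) (hqx 2) (hpolar 0 1 (by decide))
      (hpolar 0 2 (by decide)) (hpolar 1 2 (by decide))
  have mem_span {y : σ → k} (hy : c ⬝ᵥ y = 0) : y ∈ Submodule.span k {x 0, x 1, x 2} := by
    simpa only [Matrix.range_cons, Matrix.range_empty, Set.union_empty, Set.singleton_union] using
      mem_span_range_of_dotProduct_eq_zero hli (by simp [hσ]) hc
        (by simp [Fin.forall_fin_succ, hcx]) hy
  obtain ⟨a, ha, hvanish⟩ :=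
    exists_combination_eq_zero_on_span_triple hκ hqx hpolar (mem_span (hcx 3))
  refine ⟨a, ha, linearForm_dvd_of_eval_eq_zero (isHomogeneous_sum_smul hQ a) hc fun y hy => ?_⟩
  simpa [q, quadraticForm_self_apply] using hvanish y (mem_span hy)

end CoplanarPoints

section ReducibleForm

variable {σ ι k : Type*} [Field k]

lemma exists_embedding_of_forall_or [Fintype ι] {P P' : ι → Prop} (h : ∀ i, P i ∨ P' i) {n : ℕ}
    (hn : 2 * n < Fintype.card ι) :
    (∃ f : Fin (n + 1) ↪ ι, ∀ r, P (f r)) ∨ ∃ f : Fin (n + 1) ↪ ι, ∀ r, P' (f r) := by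
  classical
  have exists_embedding {P : ι → Prop} (hP : n < Fintype.card {i // P i}) :
      ∃ f : Fin (n + 1) ↪ ι, ∀ r, P (f r) := by
    obtain ⟨f⟩ : Nonempty (Fin (n + 1) ↪ {i // P i}) :=
      Function.Embedding.nonempty_of_card_le (by simpa using hP)
    exact ⟨f.trans (Function.Embedding.subtype P), fun r => (f r).2⟩
  have hcard : Fintype.card ι ≤ Fintype.card {i // P i} + Fintype.card {i // P' i} := by
    rw [← Fintype.card_congr (Equiv.subtypeUnivEquiv h)]
    exact Fintype.card_subtype_or P P'
  rcases lt_or_ge n (Fintype.card {i // P i}) with hP | hP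
  · exact .inl (exists_embedding hP)
  · exact .inr (exists_embedding (by lia))

lemma exists_hyperplane_of_not_irreducible [Fintype σ] [Fintype ι] {F : MvPolynomial σ k}
    (hF : F.IsHomogeneous 2) (hF0 : F ≠ 0) (hirr : ¬ Irreducible F) {p : ι → σ → k}
    (hp : ∀ i, eval (p i) F = 0) {n : ℕ} (hn : 2 * n < Fintype.card ι) :
    ∃ c : σ → k, c ≠ 0 ∧ ∃ f : Fin (n + 1) ↪ ι, ∀ r, c ⬝ᵥ p (f r) = 0 := by
  obtain ⟨a, b, ha, hb, hab, L, L', hL, hL', rfl⟩ :=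
    exists_eq_mul_of_not_irreducible hF two_ne_zero hF0 hirr
  obtain rfl : a = 1 := by lia
  obtain rfl : b = 1 := by lia
  obtain ⟨c, rfl⟩ := exists_eq_linearForm hL
  obtain ⟨c', rfl⟩ := exists_eq_linearForm hL'
  have ne_zero {e : σ → k} (he : linearForm e ≠ 0) : e ≠ 0 := by
    rintro rfl
    exact he (by simp [linearForm])
  have hor (i : ι) : c ⬝ᵥ p i = 0 ∨ c' ⬝ᵥ p i = 0 := by
    simpa only [map_mul, eval_linearForm, mul_eq_zero] using hp i
  rcases exists_embedding_of_forall_or hor hn with hf | hf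
  · exact ⟨c, ne_zero (left_ne_zero_of_mul hF0), hf⟩
  · exact ⟨c', ne_zero (right_ne_zero_of_mul hF0), hf⟩

end ReducibleForm

section BaseLocus

variable {σ κ ι k : Type*} [Field k]

lemma linearIndependent_of_linearIndependent_eval_pderiv {R : Type*} [CommSemiring R]
    {Q : κ → MvPolynomial σ R} (x : σ → R)
    (h : LinearIndependent R fun m i => eval x (pderiv i (Q m))) : LinearIndependent R Q := by
  let gradient : MvPolynomial σ R →ₗ[R] σ → R :=
    LinearMap.pi fun i => (aeval x).toLinearMap ∘ₗ (pderiv i).toLinearMap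
  refine LinearIndependent.of_comp gradient ?_
  convert h with m i
  exact (coe_aeval_eq_eval x ▸ rfl)

lemma linearIndependent_pair_of_not_projEq {n : ℕ} {p q : Fin n → k} (hp : p ≠ 0) (hq : q ≠ 0)
    (hpq : ¬ ProjEq p q) : LinearIndependent k ![p, q] := by
  refine (LinearIndependent.pair_iff' hp).mpr fun c hc => hpq ⟨c, ?_, hc.symm⟩
  rintro rfl
  exact hq (by simp [← hc])

lemma exists_mem_span_pair_forall_not_projEq [Infinite k] [Finite ι] {n : ℕ} {u v : Fin n → k}
    (huv : LinearIndependent k ![u, v]) (x : ι → Fin n → k) :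
    ∃ y ∈ Submodule.span k {u, v}, y ≠ 0 ∧ ∀ i, ¬ ProjEq (x i) y := by
  have hy0 (t : k) : u + t • v ≠ 0 := fun h => by
    simpa using LinearIndependent.pair_iff.mp huv 1 t (by simpa using h)
  by_contra! hall
  have hx (t : k) : ∃ i, ProjEq (x i) (u + t • v) := hall _
    (Submodule.mem_span_pair.mpr ⟨1, t, by simp⟩) (hy0 t)
  choose i hi using hx
  obtain ⟨s, t, hst, his⟩ := Finite.exists_ne_map_eq_of_infinite i
  obtain ⟨a, -, hs⟩ := hi s
  obtain ⟨b, hb, ht⟩ := hi t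
  have hli : LinearIndependent k ![(1 : k) • u + s • v, (1 : k) • u + t • v] :=
    (LinearIndependent.pair_add_smul_add_smul_iff ..).mpr ⟨huv, by simpa using hst.symm⟩
  have := LinearIndependent.pair_iff.mp hli b (-a) (by
    rw [one_smul, hs, ht, his, smul_smul, smul_smul, mul_comm, neg_mul, neg_smul, add_neg_cancel])
  exact hb this.1

/-- The form is evaluated on the base change of the line, as `k` may have too few elements. -/
lemma exists_mem_span_pair_eval_ne_zero {K : Type*} [Field K] [Infinite K] [Algebra k K]
    [Finite ι] {n : ℕ} {Q : κ → MvPolynomial (Fin n) k} (hQ : ∀ m, (Q m).IsHomogeneous 2)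
    (x : ι → Fin n → K)
    (hx : ∀ y : Fin n → K, y ≠ 0 → (∀ m, aeval y (Q m) = 0) → ∃ i, ProjEq (x i) y)
    {u v : Fin n → k} (huv : LinearIndependent k ![u, v]) :
    ∃ y ∈ Submodule.span k {u, v}, ∃ m, eval y (Q m) ≠ 0 := by
  by_contra! hvanish
  have huvK : LinearIndependent K ![algebraMap k K ∘ u, algebraMap k K ∘ v] := by
    have hcomp :
        ![algebraMap k K ∘ u, algebraMap k K ∘ v] = fun i => algebraMap k K ∘ ![u, v] i := by
      ext i
      fin_cases i <;> rfl
    exact hcomp ▸ linearIndependent_algebraMap_comp_iff.mpr huv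
  obtain ⟨y, hy, hy0, hyx⟩ := exists_mem_span_pair_forall_not_projEq huvK x
  obtain ⟨i, hi⟩ := hx y hy0 fun m => by
    rw [← quadraticForm_apply (hQ m)]
    refine quadraticForm_eq_zero_of_mem_span (hQ m) (fun z hz => hvanish z hz m)
      (Submodule.span_mono ?_ hy)
    rintro _ (rfl | rfl)
    · exact ⟨u, Submodule.subset_span (by simp), rfl⟩
    · exact ⟨v, Submodule.subset_span (by simp), rfl⟩
  exact hyx i hi

end BaseLocus

end QuadricNet

theorem net_of_quadrics_irreducible_iff_no_coplanar_quadruple_general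
    {k ι : Type*} [Field k] [Fintype ι] (hι : 7 ≤ Fintype.card ι)
    (Q : Fin 3 → MvPolynomial (Fin 4) k) (hQ : ∀ m, (Q m).IsHomogeneous 2)
    (hlin : LinearIndependent k Q) (p : ι → Fin 4 → k) (hzero : ∀ i m, eval (p i) (Q m) = 0)
    (hline : ∀ i j, i ≠ j → ∃ y ∈ Submodule.span k {p i, p j}, ∃ m, eval y (Q m) ≠ 0) :
    (∀ i j l m : ι, i ≠ j → i ≠ l → i ≠ m → j ≠ l → j ≠ m → l ≠ m →
        Matrix.det (Matrix.of ![p i, p j, p l, p m]) ≠ 0) ↔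
    (∀ a : Fin 3 → k, a ≠ 0 → Irreducible (∑ m, a m • Q m)) := by
  constructor
  · intro hdet a ha
    by_contra hirr
    have ha0 : ∑ m, a m • Q m ≠ 0 := fun h =>
      ha (funext (Fintype.linearIndependent_iff.mp hlin a h))
    obtain ⟨c, hc, f, hf⟩ := QuadricNet.exists_hyperplane_of_not_irreducible
      (QuadricNet.isHomogeneous_sum_smul hQ a) ha0 hirr (p := p) (n := 3) (by simp [hzero])
      (by lia)
    have hne {r s : Fin 4} (h : r ≠ s) : f r ≠ f s := f.injective.ne h
    exact hdet (f 0) (f 1) (f 2) (f 3) (hne (by decide)) (hne (by decide)) (hne (by decide))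
      (hne (by decide)) (hne (by decide)) (hne (by decide))
      (QuadricNet.exists_forall_dotProduct_eq_zero_iff_det_eq_zero.mp
        ⟨c, hc, by simpa [Fin.forall_fin_succ] using hf⟩)
  · intro hirr i j l m hij hil him hjl hjm hlm hdet
    obtain ⟨c, hc, hcx⟩ := QuadricNet.exists_forall_dotProduct_eq_zero_iff_det_eq_zero.mpr hdet
    have hinj : Function.Injective ![i, j, l, m] := by
      simp [Function.Injective, Fin.forall_fin_succ, *, Ne.symm]
    obtain ⟨a, ha, hdvd⟩ := QuadricNet.exists_linearForm_dvd_sum (x := p ∘ ![i, j, l, m]) rfl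
      (by simp) hQ (fun _ => hzero _) (fun r s hrs => hline _ _ (hinj.ne hrs)) hc
      (by simpa [Fin.forall_fin_succ] using hcx)
    exact QuadricNet.not_irreducible_of_dvd_of_lt (QuadricNet.isHomogeneous_sum_smul hQ a)
      (QuadricNet.isHomogeneous_linearForm c) one_ne_zero one_lt_two hdvd (hirr a ha)

/-- Let `p₁, …, p₈` be 8 distinct rational points of `ℙ³` over `k` which are the transverse
intersection of three quadrics `Q₁, Q₂, Q₃` (these being all the intersection points over the
algebraic closure).  Then no four of the points lie on a plane if and only if every nonzero
quadric in the net spanned by `Q₁, Q₂, Q₃` is irreducible. -/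
theorem net_of_quadrics_irreducible_iff_no_coplanar_quadruple
    {k : Type*} [Field k]
    (Q : Fin 3 → MvPolynomial (Fin 4) k)
    (hQ : ∀ m, (Q m).IsHomogeneous 2)
    (p : Fin 8 → (Fin 4 → k)) (hp0 : ∀ i, p i ≠ 0)
    (hdist : ∀ i j, i ≠ j → ¬ ProjEq (p i) (p j))
    (hzero : ∀ i m, eval (p i) (Q m) = 0)
    (hall : ∀ q : Fin 4 → AlgebraicClosure k, q ≠ 0 →
      (∀ m, eval q (map (algebraMap k (AlgebraicClosure k)) (Q m)) = 0) →
      ∃ i, ProjEq (fun j => algebraMap k (AlgebraicClosure k) (p i j)) q)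
    (htrans : ∀ i, LinearIndependent k
      ![fun a => eval (p i) (pderiv a (Q 0)),
        fun a => eval (p i) (pderiv a (Q 1)),
        fun a => eval (p i) (pderiv a (Q 2))]) :
    (∀ i j l m : Fin 8, i ≠ j → i ≠ l → i ≠ m → j ≠ l → j ≠ m → l ≠ m →
        Matrix.det (Matrix.of ![p i, p j, p l, p m]) ≠ 0) ↔
    (∀ a : Fin 3 → k, a ≠ 0 → Irreducible (∑ m, a m • Q m)) := by
  exact net_of_quadrics_irreducible_iff_no_coplanar_quadruple_general (by simp) Q hQ
    (QuadricNet.linearIndependent_of_linearIndependent_eval_pderiv (p 0)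
      (FinVec.etaExpand_eq (fun m i => eval (p 0) (pderiv i (Q m))) ▸ htrans 0)) p hzero
    fun i j hij => QuadricNet.exists_mem_span_pair_eval_ne_zero hQ _
      (by simpa only [eval_map, ← aeval_def] using hall)
      (QuadricNet.linearIndependent_pair_of_not_projEq (hp0 i) (hp0 j) (hdist i j hij))
end
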